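/- arXiv:2308.00840 — 12 statements merged into one kernel-verified Lean document; each statement's English description precedes it below -/
import Mathlib

section
/- Let x be an optimal feasible solution of the vertex-cover LP, and set L = {v ∈ V : 0 < x_v < 1/2} and H = {v ∈ V : 1/2 < x_v < 1}. Then w(L) = w(H). -/
/-- Finitely many positive reals have a common positive lower bound. -/
lemma exists_pos_forall_le_of_pos {ι : Type*} [Finite ι] (f : ι → ℝ) :
    ∃ ε > 0, ∀ i, 0 < f i → ε ≤ f i := by
  have h : ∀ᶠ ε in nhdsWithin (0 : ℝ) (Set.Ioi 0), ∀ i, 0 < f i → ε ≤ f i := by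
    refine Filter.eventually_all.2 fun i => ?_
    by_cases hi : 0 < f i
    · filter_upwards [Ioo_mem_nhdsGT hi] with ε hε _ using hε.2.le
    · exact Filter.Eventually.of_forall fun ε h => absurd h hi
  obtain ⟨ε, hε, hpos⟩ := (h.and self_mem_nhdsWithin).exists
  exact ⟨ε, hpos, hε⟩

/-- For an optimal feasible solution `x` of the vertex-cover LP, with
`L = {v : 0 < x v < 1/2}` and `H = {v : 1/2 < x v < 1}`, one has `w(L) = w(H)`. -/
theorem weight_L_eq_weight_H_of_optimal {V : Type*} [Fintype V]
    (G : SimpleGraph V) (w : V → ℝ) (hw : ∀ v, 0 < w v)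
    (x : V → ℝ)
    (hx0 : ∀ v, 0 ≤ x v)
    (hxE : ∀ u v, G.Adj u v → 1 ≤ x u + x v)
    (hopt : ∀ y : V → ℝ, (∀ v, 0 ≤ y v) → (∀ u v, G.Adj u v → 1 ≤ y u + y v) →
      ∑ v, w v * x v ≤ ∑ v, w v * y v)
    (L H : Finset V)
    (hL : ∀ v, v ∈ L ↔ 0 < x v ∧ x v < 1/2)
    (hH : ∀ v, v ∈ H ↔ 1/2 < x v ∧ x v < 1) :
    ∑ v ∈ L, w v = ∑ v ∈ H, w v := by
  classical
  obtain ⟨a, ha, hax⟩ := exists_pos_forall_le_of_pos x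
  obtain ⟨b, hb, hbx⟩ := exists_pos_forall_le_of_pos fun v => x v - 1 / 2
  set d : V → ℝ := fun v => (if v ∈ L then 1 else 0) - (if v ∈ H then 1 else 0) with hd
  have hdL : ∀ v, 0 < x v → x v < 1 / 2 → d v = 1 := fun v h₁ h₂ => by
    have : ¬ (1 / 2 < x v ∧ x v < 1) := fun h => by linarith [h.1]
    simp only [hd, hL, hH, if_pos (And.intro h₁ h₂), if_neg this, sub_zero]
  have hdH : ∀ v, 1 / 2 < x v → x v < 1 → d v = -1 := fun v h₁ h₂ => by
    have : ¬ (0 < x v ∧ x v < 1 / 2) := fun h => by linarith [h.2]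
    simp only [hd, hL, hH, if_pos (And.intro h₁ h₂), if_neg this, zero_sub]
  have hd0 : ∀ v, x v ≤ 0 ∨ x v = 1 / 2 ∨ 1 ≤ x v → d v = 0 := fun v h => by
    have h₁ : ¬ (0 < x v ∧ x v < 1 / 2) := by
      rintro ⟨_, _⟩; rcases h with h | h | h <;> linarith
    have h₂ : ¬ (1 / 2 < x v ∧ x v < 1) := by
      rintro ⟨_, _⟩; rcases h with h | h | h <;> linarith
    simp only [hd, hL, hH, if_neg h₁, if_neg h₂, sub_zero]
  have hcases : ∀ v, (x v = 0 ∧ d v = 0) ∨ (a ≤ x v ∧ x v < 1 / 2 ∧ d v = 1) ∨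
      (x v = 1 / 2 ∧ d v = 0) ∨ (b ≤ x v - 1 / 2 ∧ x v < 1 ∧ d v = -1) ∨
      (1 ≤ x v ∧ d v = 0) := fun v => by
    rcases (hx0 v).eq_or_lt with h | h
    · exact .inl ⟨h.symm, hd0 v (.inl h.symm.le)⟩
    rcases lt_trichotomy (x v) (1 / 2) with h' | h' | h'
    · exact .inr (.inl ⟨hax v h, h', hdL v h h'⟩)
    · exact .inr (.inr (.inl ⟨h', hd0 v (.inr (.inl h'))⟩))
    rcases lt_or_ge (x v) 1 with h'' | h''
    · exact .inr (.inr (.inr (.inl ⟨hbx v (sub_pos.2 h'), h'', hdH v h' h''⟩)))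
    · exact .inr (.inr (.inr (.inr ⟨h'', hd0 v (.inr (.inr h''))⟩)))
  have key : ∀ t : ℝ, |t| ≤ min a b → 0 ≤ t * ∑ v, w v * d v := fun t ht => by
    obtain ⟨hta, htb⟩ := le_min_iff.1 ht
    rw [abs_le] at hta htb
    have hle := hopt (fun v => x v + t * d v)
      (fun v => by
        rcases hcases v with ⟨_, h⟩ | ⟨_, _, h⟩ | ⟨_, h⟩ | ⟨_, _, h⟩ | ⟨_, h⟩ <;>
          rw [h] <;> linarith)
      (fun u v huv => by
        have := hxE u v huv
        rcases hcases u with ⟨_, hu⟩ | ⟨_, _, hu⟩ | ⟨_, hu⟩ | ⟨_, _, hu⟩ | ⟨_, hu⟩ <;>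
        rcases hcases v with ⟨_, hv⟩ | ⟨_, _, hv⟩ | ⟨_, hv⟩ | ⟨_, _, hv⟩ | ⟨_, hv⟩ <;>
          rw [hu, hv] <;> linarith)
    have hsum : ∑ v, w v * (x v + t * d v) = ∑ v, w v * x v + t * ∑ v, w v * d v := by
      rw [Finset.mul_sum, ← Finset.sum_add_distrib]
      exact Finset.sum_congr rfl fun v _ => by ring
    linarith
  have hm : 0 < min a b := lt_min ha hb
  have hzero : ∑ v, w v * d v = 0 := by
    have h₁ := key (min a b) (abs_of_pos hm).le
    have h₂ := key (-min a b) (by rw [abs_neg, abs_of_pos hm])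
    nlinarith
  have hdiff : ∑ v, w v * d v = ∑ v ∈ L, w v - ∑ v ∈ H, w v := by
    simp [hd, mul_sub, Finset.sum_sub_distrib]
  linarith
end

section
/- Let x be a feasible solution of the vertex-cover LP with x_v ≤ 1 for all v, let L = {v ∈ V : 0 < x_v < 1/2} and H = {v ∈ V : 1/2 < x_v < 1}, and suppose L ∪ H is nonempty. Let ε = min_{v ∈ L ∪ H} |x_v − 1/2|. Then the assignment y given by y_v = x_v − ε for v ∈ H, y_v = x_v + ε for v ∈ L, and y_v = x_v otherwise, is feasible for the vertex-cover LP, and val(y) = val(x) + ε(w(L) − w(H)). -/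
/-- Given a feasible LP solution `x` with `x v ≤ 1`, sets
`L = {v : 0 < x v < 1/2}` and `H = {v : 1/2 < x v < 1}` with `L ∪ H` nonempty, and
`ε = min_{v ∈ L ∪ H} |x v - 1/2|`, the shifted assignment `y` (subtracting `ε` on `H`,
adding `ε` on `L`) is feasible, and `val(y) = val(x) + ε (w(L) - w(H))`. -/
theorem shifted_assignment_feasible {V : Type*} [Fintype V] [DecidableEq V]
    (G : SimpleGraph V) (w : V → ℝ) (hw : ∀ v, 0 < w v)
    (x : V → ℝ)
    (hx0 : ∀ v, 0 ≤ x v)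
    (hxE : ∀ u v, G.Adj u v → 1 ≤ x u + x v)
    (hx1 : ∀ v, x v ≤ 1)
    (L H : Finset V)
    (hL : ∀ v, v ∈ L ↔ 0 < x v ∧ x v < 1/2)
    (hH : ∀ v, v ∈ H ↔ 1/2 < x v ∧ x v < 1)
    (hne : (L ∪ H).Nonempty)
    (ε : ℝ) (hε : ε = (L ∪ H).inf' hne fun v => |x v - 1/2|)
    (y : V → ℝ)
    (hy : ∀ v, y v = if v ∈ H then x v - ε else if v ∈ L then x v + ε else x v) :
    (∀ v, 0 ≤ y v) ∧
    (∀ u v, G.Adj u v → 1 ≤ y u + y v) ∧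
    ∑ v, w v * y v = ∑ v, w v * x v + ε * (∑ v ∈ L, w v - ∑ v ∈ H, w v) := by
  have hε0 : 0 ≤ ε := by
    rw [hε]
    exact Finset.le_inf' _ _ fun v _ => abs_nonneg _
  have hεH : ∀ v ∈ H, ε ≤ x v - 1/2 := fun v hv => by
    have h := Finset.inf'_le (fun v => |x v - 1/2|) (Finset.mem_union_right L hv)
    rwa [← hε, abs_of_pos (by linarith [((hH v).1 hv).1])] at h
  have hyH : ∀ v ∈ H, y v = x v - ε := fun v hv => by rw [hy, if_pos hv]
  have hyL : ∀ v ∈ L, y v = x v + ε := fun v hv => by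
    have hvH : v ∉ H := fun h => by linarith [((hH v).1 h).1, ((hL v).1 hv).2]
    rw [hy, if_neg hvH, if_pos hv]
  have hy_ge : ∀ v, v ∉ H → x v ≤ y v := fun v hv => by
    rw [hy, if_neg hv]
    split_ifs <;> linarith
  have hyH_ge : ∀ v ∈ H, 1/2 ≤ y v := fun v hv => by linarith [hyH v hv, hεH v hv]
  have hy0 : ∀ v, 0 ≤ y v := fun v => by
    by_cases hv : v ∈ H
    · linarith [hyH_ge v hv]
    · exact (hx0 v).trans (hy_ge v hv)
  have hmixed : ∀ u v, u ∈ H → v ∉ H → G.Adj u v → 1 ≤ y u + y v := by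
    intro u v hu hv huv
    by_cases hvL : v ∈ L
    · linarith [hyH u hu, hyL v hvL, hxE u v huv]
    · have hvpos : 0 < x v := by linarith [hxE u v huv, ((hH u).1 hu).2]
      have hvhalf : 1/2 ≤ x v := not_lt.1 fun h => hvL ((hL v).2 ⟨hvpos, h⟩)
      linarith [hyH_ge u hu, hy_ge v hv]
  refine ⟨hy0, fun u v huv => ?_, ?_⟩
  · by_cases hu : u ∈ H <;> by_cases hv : v ∈ H
    · linarith [hyH_ge u hu, hyH_ge v hv]
    · exact hmixed u v hu hv huv
    · linarith [hmixed v u hv hu huv.symm]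
    · linarith [hxE u v huv, hy_ge u hu, hy_ge v hv]
  · have hterm : ∀ v, w v * y v =
        w v * x v + ε * ((if v ∈ L then w v else 0) - if v ∈ H then w v else 0) := by
      intro v
      by_cases hvH : v ∈ H
      · have hvL : v ∉ L := fun h => by linarith [((hH v).1 hvH).1, ((hL v).1 h).2]
        rw [hyH v hvH, if_neg hvL, if_pos hvH]
        ring
      · rw [hy, if_neg hvH, if_neg hvH]
        split_ifs <;> ring
    simp_rw [hterm, Finset.sum_add_distrib, ← Finset.mul_sum, Finset.sum_sub_distrib,
      Finset.sum_ite_mem, Finset.univ_inter]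
end

section
/- Let S be a vertex cover of the bipartite double cover G_B of G. Define x_v = (χ_S(v_1) + χ_S(v_2))/2 for every v ∈ V, where χ_S is the indicator function of S. Then x is a feasible half-integral solution of the vertex-cover LP of G with value val(x) = w(S)/2. -/
/-- The bipartite double cover of a graph `G`: vertices are `V ⊕ V`, with `Sum.inl u`
adjacent to `Sum.inr v` whenever `u` and `v` are adjacent in `G`. -/
def doubleCover {V : Type*} (G : SimpleGraph V) : SimpleGraph (V ⊕ V) :=
  SimpleGraph.fromRel (fun a b => ∃ u v, G.Adj u v ∧ a = Sum.inl u ∧ b = Sum.inr v)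

/-- Adjacent vertices `u`, `v` of `G` give the edge `u₁ v₂` of the double cover. -/
theorem doubleCover_adj_inl_inr {V : Type*} {G : SimpleGraph V} {u v : V} (h : G.Adj u v) :
    (doubleCover G).Adj (Sum.inl u) (Sum.inr v) :=
  ⟨Sum.inl_ne_inr, Or.inl ⟨u, v, h, rfl, rfl⟩⟩

/-- If `S` is a vertex cover of the bipartite double cover of `G`, then
`x v = (χ_S(v₁) + χ_S(v₂))/2` is a feasible half-integral solution of the vertex-cover
LP of `G` with value `w(S)/2`. -/
theorem doubleCover_vc_gives_halfIntegral_LP {V : Type*} [Fintype V] [DecidableEq V]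
    (G : SimpleGraph V) (w : V → ℝ) (hw : ∀ v, 0 < w v)
    (S : Finset (V ⊕ V))
    (hS : ∀ a b, (doubleCover G).Adj a b → a ∈ S ∨ b ∈ S)
    (x : V → ℝ)
    (hx : ∀ v, x v = ((if Sum.inl v ∈ S then (1:ℝ) else 0) +
      (if Sum.inr v ∈ S then (1:ℝ) else 0)) / 2) :
    (∀ v, 0 ≤ x v) ∧
    (∀ u v, G.Adj u v → 1 ≤ x u + x v) ∧
    (∀ v, x v = 0 ∨ x v = 1/2 ∨ x v = 1) ∧
    ∑ v, w v * x v = (∑ a ∈ S, Sum.elim w w a) / 2 := by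
  refine ⟨fun v => ?_, fun u v huv => ?_, fun v => ?_, ?_⟩
  · rw [hx]
    positivity
  · have h₁ := hS _ _ (doubleCover_adj_inl_inr huv)
    have h₂ := hS _ _ (doubleCover_adj_inl_inr huv.symm)
    rw [hx, hx]
    split_ifs <;> first | (norm_num; done) | simp_all
  · rw [hx]
    split_ifs <;> norm_num
  · have hsum : ∑ a ∈ S, Sum.elim w w a = ∑ a, if a ∈ S then Sum.elim w w a else 0 := by
      simp
    rw [hsum, Fintype.sum_sum_type, ← Finset.sum_add_distrib, Finset.sum_div]
    refine Finset.sum_congr rfl fun v _ => ?_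
    rw [hx]
    simp only [Sum.elim_inl, Sum.elim_inr]
    split_ifs <;> ring
end

section
/- The minimum weight of a vertex cover of the bipartite double cover G_B of G equals twice the optimal (minimum) value of the vertex-cover LP of G. -/
/-- A finset covers the double cover as soon as it meets every edge `inl u — inr v`. -/
theorem doubleCover_isCover {V : Type*} {G : SimpleGraph V} {S : Finset (V ⊕ V)}
    (h : ∀ u v, G.Adj u v → Sum.inl u ∈ S ∨ Sum.inr v ∈ S) (a b : V ⊕ V)
    (hab : (doubleCover G).Adj a b) : a ∈ S ∨ b ∈ S := by
  rw [doubleCover, SimpleGraph.fromRel_adj] at hab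
  obtain ⟨-, ⟨u, v, huv, rfl, rfl⟩ | ⟨u, v, huv, rfl, rfl⟩⟩ := hab
  · exact h u v huv
  · exact (h u v huv).symm

theorem sum_sumElim_eq {V : Type*} [Fintype V] [DecidableEq V] (w : V → ℝ)
    (S : Finset (V ⊕ V)) :
    ∑ a ∈ S, Sum.elim w w a =
      ∑ v, w v * ((if Sum.inl v ∈ S then 1 else 0) + (if Sum.inr v ∈ S then 1 else 0)) := by
  have h : ∑ a ∈ S, Sum.elim w w a = ∑ a, if a ∈ S then Sum.elim w w a else 0 := by simp
  rw [h, Fintype.sum_sum_type]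
  simp only [mul_add, Finset.sum_add_distrib, mul_ite, mul_one, mul_zero, Sum.elim_inl,
    Sum.elim_inr]

theorem setIntegral_Icc_indicator_le {s : Set ℝ} (hs : MeasurableSet s) {a b : ℝ} (hab : a ≤ b)
    (h : s ∩ Set.Icc 0 1 ⊆ Set.Icc a b) :
    ∫ t in Set.Icc (0 : ℝ) 1, s.indicator 1 t ≤ b - a := by
  rw [MeasureTheory.integral_indicator_one hs, MeasureTheory.measureReal_restrict_apply hs,
    ← Real.volume_real_Icc_of_le hab]
  exact MeasureTheory.measureReal_mono h measure_Icc_lt_top.ne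

/-- Averaging the threshold covers `{inl v | t ≤ x v} ∪ {inr v | 1 - x v ≤ t}` over `t ∈ [0, 1]`:
a lower bound for all of their weights is at most twice the value of `x`. -/
theorem le_two_mul_sum_of_forall_threshold {V : Type*} [Fintype V] {w x : V → ℝ} {c : ℝ}
    (hw : ∀ v, 0 ≤ w v) (hx : ∀ v, 0 ≤ x v)
    (hc : ∀ t : ℝ, c ≤ ∑ v, w v *
      ((Set.Iic (x v)).indicator 1 t + (Set.Ici (1 - x v)).indicator 1 t)) :
    c ≤ 2 * ∑ v, w v * x v := by
  have hint : ∀ s : Set ℝ, MeasurableSet s → MeasureTheory.IntegrableOn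
      (s.indicator (1 : ℝ → ℝ)) (Set.Icc 0 1) := fun s hs =>
    (MeasureTheory.integrable_const (1 : ℝ)).indicator hs
  have hsum : ∀ v, MeasureTheory.IntegrableOn (fun t => w v *
      ((Set.Iic (x v)).indicator 1 t + (Set.Ici (1 - x v)).indicator 1 t)) (Set.Icc 0 1) :=
    fun v => ((hint _ measurableSet_Iic).add (hint _ measurableSet_Ici)).const_mul (w v)
  calc c = ∫ _ in Set.Icc (0 : ℝ) 1, c := by simp
    _ ≤ ∫ t in Set.Icc (0 : ℝ) 1, ∑ v, w v *
        ((Set.Iic (x v)).indicator 1 t + (Set.Ici (1 - x v)).indicator 1 t) :=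
      MeasureTheory.integral_mono (MeasureTheory.integrable_const c)
        (MeasureTheory.integrable_finsetSum _ fun v _ => hsum v) hc
    _ = ∑ v, w v * ((∫ t in Set.Icc (0 : ℝ) 1, (Set.Iic (x v)).indicator 1 t) +
        ∫ t in Set.Icc (0 : ℝ) 1, (Set.Ici (1 - x v)).indicator 1 t) := by
      rw [MeasureTheory.integral_finsetSum _ fun v _ => hsum v]
      refine Finset.sum_congr rfl fun v _ => ?_
      rw [MeasureTheory.integral_const_mul, MeasureTheory.integral_add
        (hint _ measurableSet_Iic) (hint _ measurableSet_Ici)]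
    _ ≤ ∑ v, w v * ((x v - 0) + (1 - (1 - x v))) := by
      refine Finset.sum_le_sum fun v _ => mul_le_mul_of_nonneg_left (add_le_add ?_ ?_) (hw v)
      · exact setIntegral_Icc_indicator_le measurableSet_Iic (hx v)
          fun t ht => ⟨ht.2.1, ht.1⟩
      · exact setIntegral_Icc_indicator_le measurableSet_Ici (by linarith [hx v])
          fun t ht => ⟨ht.1, ht.2.2⟩
    _ = 2 * ∑ v, w v * x v := by
      rw [Finset.mul_sum]
      exact Finset.sum_congr rfl fun v _ => by ring

/-- The minimum weight of a vertex cover of the bipartite double cover of `G`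
equals twice the optimal value of the vertex-cover LP of `G`. -/
theorem doubleCover_vcStar_eq_two_mul_LP_opt {V : Type*} [Fintype V] [DecidableEq V]
    (G : SimpleGraph V) (w : V → ℝ) (hw : ∀ v, 0 < w v)
    (vcB lp : ℝ)
    (hvcB : IsLeast {r : ℝ | ∃ S : Finset (V ⊕ V),
      (∀ a b, (doubleCover G).Adj a b → a ∈ S ∨ b ∈ S) ∧
      r = ∑ a ∈ S, Sum.elim w w a} vcB)
    (hlp : IsLeast {r : ℝ | ∃ x : V → ℝ,
      (∀ v, 0 ≤ x v) ∧ (∀ u v, G.Adj u v → 1 ≤ x u + x v) ∧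
      r = ∑ v, w v * x v} lp) :
    vcB = 2 * lp := by
  apply le_antisymm
  · obtain ⟨x, hx, hxe, rfl⟩ := hlp.1
    refine le_two_mul_sum_of_forall_threshold (fun v => (hw v).le) hx fun t => hvcB.2 ?_
    classical
    refine ⟨Finset.univ.filter (Sum.elim (fun v => t ≤ x v) (fun v => 1 - x v ≤ t)),
      doubleCover_isCover fun u v huv => ?_, ?_⟩
    · have := hxe u v huv
      simp only [Finset.mem_filter_univ, Sum.elim_inl, Sum.elim_inr]
      by_contra! h
      linarith
    · simp [sum_sumElim_eq, Set.indicator_apply]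
  · obtain ⟨S, hS, rfl⟩ := hvcB.1
    have hle := hlp.2 ⟨fun v => ((if Sum.inl v ∈ S then 1 else 0) +
      (if Sum.inr v ∈ S then 1 else 0)) / 2, fun v => by positivity, fun u v huv => ?_, rfl⟩
    · simp_rw [← mul_div_assoc, ← Finset.sum_div, ← sum_sumElim_eq] at hle
      linarith
    · have h₁ := hS _ _ (doubleCover_adj_inl_inr huv)
      have h₂ := hS _ _ (doubleCover_adj_inl_inr huv.symm)
      dsimp only
      split_ifs <;> first | (norm_num; done) | simp_all
end

section
/- (Weighted Nemhauser–Trotter theorem) Let x be an optimal half-integral solution of the vertex-cover LP of G, with V_0 = {v : x_v = 0}, V_{1/2} = {v : x_v = 1/2}, V_1 = {v : x_v = 1}. Then there exists a minimum-weight vertex cover S of G such that V_1 ⊆ S ⊆ V_1 ∪ V_{1/2}. -/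
/-- A finite weighted graph has a minimum-weight vertex cover. -/
theorem exists_minWeight_vertexCover {V : Type*} [Fintype V]
    (G : SimpleGraph V) (w : V → ℝ) :
    ∃ C : Finset V, (∀ u v, G.Adj u v → u ∈ C ∨ v ∈ C) ∧
      ∀ D : Finset V, (∀ u v, G.Adj u v → u ∈ D ∨ v ∈ D) →
        ∑ v ∈ C, w v ≤ ∑ v ∈ D, w v :=
  Set.exists_min_image {C : Finset V | ∀ u v, G.Adj u v → u ∈ C ∨ v ∈ C}
    (fun C => ∑ v ∈ C, w v) (Set.toFinite _)
    ⟨Finset.univ, fun u _ _ => Or.inl (Finset.mem_univ u)⟩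

/-- Weighted Nemhauser–Trotter: For an optimal half-integral LP solution `x`
with level sets `V₀, V_{1/2}, V₁`, there exists a minimum-weight vertex cover `S` of `G`
with `V₁ ⊆ S ⊆ V₁ ∪ V_{1/2}`. -/
theorem nemhauser_trotter {V : Type*} [Fintype V] [DecidableEq V]
    (G : SimpleGraph V) (w : V → ℝ) (hw : ∀ v, 0 < w v)
    (x : V → ℝ)
    (hx0 : ∀ v, 0 ≤ x v)
    (hxE : ∀ u v, G.Adj u v → 1 ≤ x u + x v)
    (hHalf : ∀ v, x v = 0 ∨ x v = 1/2 ∨ x v = 1)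
    (hopt : ∀ y : V → ℝ, (∀ v, 0 ≤ y v) → (∀ u v, G.Adj u v → 1 ≤ y u + y v) →
      ∑ v, w v * x v ≤ ∑ v, w v * y v)
    (V0 V12 V1 : Finset V)
    (hV0 : ∀ v, v ∈ V0 ↔ x v = 0)
    (hV12 : ∀ v, v ∈ V12 ↔ x v = 1/2)
    (hV1 : ∀ v, v ∈ V1 ↔ x v = 1) :
    ∃ S : Finset V,
      (∀ u v, G.Adj u v → u ∈ S ∨ v ∈ S) ∧
      (∀ C : Finset V, (∀ u v, G.Adj u v → u ∈ C ∨ v ∈ C) →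
        ∑ v ∈ S, w v ≤ ∑ v ∈ C, w v) ∧
      V1 ⊆ S ∧ S ⊆ V1 ∪ V12 := by
  obtain ⟨C, hC, hmin⟩ := exists_minWeight_vertexCover G w
  have hS : ∀ v, v ∈ V1 ∪ (C ∩ V12) ↔ x v = 1 ∨ (v ∈ C ∧ x v = 1/2) := by
    intro v
    simp only [Finset.mem_union, Finset.mem_inter, hV1, hV12]
  refine ⟨V1 ∪ (C ∩ V12), ?_, fun D hD => le_trans ?_ (hmin D hD),
    Finset.subset_union_left, Finset.union_subset_union_right Finset.inter_subset_right⟩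
  · intro u v huv
    rw [hS, hS]
    have hsum := hxE u v huv
    revert hsum
    rcases hHalf u with hu | hu | hu <;> rcases hHalf v with hv | hv | hv <;>
      rcases hC u v huv with h | h <;> norm_num [hu, hv, h]
  · generalize V1 ∪ (C ∩ V12) = S at hS ⊢
    -- Moving `x` by half the difference of the indicators of `C` and `S` preserves feasibility.
    have hle := hopt
      (fun v => x v + ((if v ∈ C then 1 else 0) - (if v ∈ S then 1 else 0)) / 2) ?_ ?_
    · have hsplit : ∑ v, w v * (x v + ((if v ∈ C then 1 else 0) - (if v ∈ S then 1 else 0)) / 2)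
          = ∑ v, w v * x v + (∑ v ∈ C, w v - ∑ v ∈ S, w v) / 2 := by
        simp only [mul_add, mul_div_assoc', mul_sub, mul_ite, mul_one, mul_zero,
          Finset.sum_add_distrib, ← Finset.sum_div, Finset.sum_sub_distrib,
          Finset.sum_ite_mem, Finset.univ_inter]
      linarith
    · intro v
      rcases hHalf v with hv | hv | hv <;> by_cases h : v ∈ C <;> norm_num [hS, hv, h]
    · intro u v huv
      have hsum := hxE u v huv
      have hcov := hC u v huv
      revert hsum hcov
      rcases hHalf u with hu | hu | hu <;> rcases hHalf v with hv | hv | hv <;>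
        by_cases h : u ∈ C <;> by_cases h' : v ∈ C <;>
        norm_num [hS, hu, hv, h, h']
end

section
/- Let x be an optimal half-integral solution of the vertex-cover LP of G, with V_0 = {v : x_v = 0} and V_1 = {v : x_v = 1}. Then for every vertex cover S_opt of G, one has w(V_0 ∩ S_opt) ≥ w(V_1 \ S_opt). -/
/-- For an optimal half-integral LP solution `x` with level sets `V₀, V₁`,
every vertex cover `Sopt` of `G` satisfies `w(V₀ ∩ Sopt) ≥ w(V₁ \ Sopt)`. -/
theorem weight_V0_inter_ge_weight_V1_sdiff {V : Type*} [Fintype V] [DecidableEq V]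
    (G : SimpleGraph V) (w : V → ℝ) (hw : ∀ v, 0 < w v)
    (x : V → ℝ)
    (hx0 : ∀ v, 0 ≤ x v)
    (hxE : ∀ u v, G.Adj u v → 1 ≤ x u + x v)
    (hHalf : ∀ v, x v = 0 ∨ x v = 1/2 ∨ x v = 1)
    (hopt : ∀ y : V → ℝ, (∀ v, 0 ≤ y v) → (∀ u v, G.Adj u v → 1 ≤ y u + y v) →
      ∑ v, w v * x v ≤ ∑ v, w v * y v)
    (V0 V1 : Finset V)
    (hV0 : ∀ v, v ∈ V0 ↔ x v = 0)
    (hV1 : ∀ v, v ∈ V1 ↔ x v = 1)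
    (Sopt : Finset V)
    (hSopt : ∀ u v, G.Adj u v → u ∈ Sopt ∨ v ∈ Sopt) :
    ∑ v ∈ V1 \ Sopt, w v ≤ ∑ v ∈ V0 ∩ Sopt, w v := by
  -- Move the vertices of `V0 ∩ Sopt` up and those of `V1 \ Sopt` down to `1 / 2`.
  have hle := hopt (fun v => x v + (if v ∈ V0 ∩ Sopt then 1 / 2 else 0)
      - (if v ∈ V1 \ Sopt then 1 / 2 else 0))
    (by
      intro v
      have hv := hx0 v
      simp only [Finset.mem_inter, Finset.mem_sdiff, hV0, hV1]
      split_ifs <;> grind)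
    (by
      intro u v huv
      have hcover := hSopt u v huv
      have hedge := hxE u v huv
      simp only [Finset.mem_inter, Finset.mem_sdiff, hV0, hV1]
      have hu := hHalf u
      have hv := hHalf v
      split_ifs <;> grind)
  simp only [mul_sub, mul_add, mul_ite, mul_zero, Finset.sum_sub_distrib,
    Finset.sum_add_distrib, Finset.sum_ite_mem, Finset.univ_inter, ← Finset.sum_mul] at hle
  linarith
end

section
/- Let x be an optimal half-integral solution of the vertex-cover LP of G, with V_0, V_{1/2}, V_1 the sets of vertices where x equals 0, 1/2, 1 respectively, and let S_opt be a minimum-weight vertex cover of G. Then S = (S_opt \ V_0) ∪ V_1 is also a minimum-weight vertex cover of G, and it satisfies V_1 ⊆ S ⊆ V_1 ∪ V_{1/2}. -/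
/-- For an optimal half-integral LP solution `x` with level sets
`V₀, V_{1/2}, V₁`, and a minimum-weight vertex cover `Sopt` of `G`, the set
`S = (Sopt \ V₀) ∪ V₁` is also a minimum-weight vertex cover of `G`, and it satisfies
`V₁ ⊆ S ⊆ V₁ ∪ V_{1/2}`. -/
theorem shifted_min_vertexCover {V : Type*} [Fintype V] [DecidableEq V]
    (G : SimpleGraph V) (w : V → ℝ) (hw : ∀ v, 0 < w v)
    (x : V → ℝ)
    (hx0 : ∀ v, 0 ≤ x v)
    (hxE : ∀ u v, G.Adj u v → 1 ≤ x u + x v)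
    (hHalf : ∀ v, x v = 0 ∨ x v = 1/2 ∨ x v = 1)
    (hopt : ∀ y : V → ℝ, (∀ v, 0 ≤ y v) → (∀ u v, G.Adj u v → 1 ≤ y u + y v) →
      ∑ v, w v * x v ≤ ∑ v, w v * y v)
    (V0 V12 V1 : Finset V)
    (hV0 : ∀ v, v ∈ V0 ↔ x v = 0)
    (hV12 : ∀ v, v ∈ V12 ↔ x v = 1/2)
    (hV1 : ∀ v, v ∈ V1 ↔ x v = 1)
    (Sopt : Finset V)
    (hSopt : ∀ u v, G.Adj u v → u ∈ Sopt ∨ v ∈ Sopt)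
    (hSoptMin : ∀ C : Finset V, (∀ u v, G.Adj u v → u ∈ C ∨ v ∈ C) →
      ∑ v ∈ Sopt, w v ≤ ∑ v ∈ C, w v) :
    (∀ u v, G.Adj u v → u ∈ (Sopt \ V0) ∪ V1 ∨ v ∈ (Sopt \ V0) ∪ V1) ∧
    (∀ C : Finset V, (∀ u v, G.Adj u v → u ∈ C ∨ v ∈ C) →
      ∑ v ∈ (Sopt \ V0) ∪ V1, w v ≤ ∑ v ∈ C, w v) ∧
    V1 ⊆ (Sopt \ V0) ∪ V1 ∧ (Sopt \ V0) ∪ V1 ⊆ V1 ∪ V12 := by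
  set S := (Sopt \ V0) ∪ V1 with hS
  have mem_S (v : V) : v ∈ S ↔ (v ∈ Sopt ∧ x v ≠ 0) ∨ x v = 1 := by
    simp [hS, hV0, hV1]
  refine ⟨fun u v huv => ?_, fun C hC => ?_, Finset.subset_union_right, fun v hv => ?_⟩
  · have hle := hxE u v huv
    have hcov := hSopt u v huv
    rw [mem_S, mem_S]
    revert hle hcov
    rcases hHalf u with hu | hu | hu <;> rcases hHalf v with hv | hv | hv <;>
      norm_num [hu, hv]
  · -- Moving `x` by half the difference of the two indicators keeps it feasible.
    let y : V → ℝ := fun v =>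
      x v + ((if v ∈ Sopt then 1 else 0) - (if v ∈ S then 1 else 0)) / 2
    have hval : ∑ v, w v * y v =
        ∑ v, w v * x v + (∑ v ∈ Sopt, w v - ∑ v ∈ S, w v) / 2 := by
      have indicator_sum (T : Finset V) :
          ∑ v ∈ T, w v = ∑ v, w v * (if v ∈ T then 1 else 0) := by simp
      rw [indicator_sum Sopt, indicator_sum S, ← Finset.sum_sub_distrib, Finset.sum_div,
        ← Finset.sum_add_distrib]
      exact Finset.sum_congr rfl fun v _ => by ring
    have hle := hopt y (fun v => ?_) (fun u v huv => ?_)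
    · linarith [hSoptMin C hC]
    · simp only [y, mem_S]
      rcases hHalf v with hv | hv | hv <;> by_cases hvS : v ∈ Sopt <;> norm_num [hv, hvS]
    · have hle := hxE u v huv
      have hcov := hSopt u v huv
      simp only [y, mem_S]
      revert hle hcov
      rcases hHalf u with hu | hu | hu <;> rcases hHalf v with hv | hv | hv <;>
        by_cases huS : u ∈ Sopt <;> by_cases hvS : v ∈ Sopt <;>
        norm_num [hu, hv, huS, hvS]
  · rw [mem_S] at hv
    rw [Finset.mem_union, hV1, hV12]
    rcases hHalf v with h | h | h <;> simp_all
end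

section
/- Let x be an optimal half-integral solution of the vertex-cover LP of G, with V_0, V_{1/2}, V_1 the sets of vertices where x equals 0, 1/2, 1 respectively, and let G[V_{1/2}] denote the induced subgraph of G on V_{1/2}. If C is a minimum-weight vertex cover of G[V_{1/2}], then C ∪ V_1 is a minimum-weight vertex cover of G. -/
/-- For an optimal half-integral LP solution `x` with level sets
`V₀, V_{1/2}, V₁`, if `C` is a minimum-weight vertex cover of the induced subgraph
`G[V_{1/2}]`, then `C ∪ V₁` is a minimum-weight vertex cover of `G`. -/
theorem min_vc_of_induced_union_V1 {V : Type*} [Fintype V] [DecidableEq V]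
    (G : SimpleGraph V) (w : V → ℝ) (hw : ∀ v, 0 < w v)
    (x : V → ℝ)
    (hx0 : ∀ v, 0 ≤ x v)
    (hxE : ∀ u v, G.Adj u v → 1 ≤ x u + x v)
    (hHalf : ∀ v, x v = 0 ∨ x v = 1/2 ∨ x v = 1)
    (hopt : ∀ y : V → ℝ, (∀ v, 0 ≤ y v) → (∀ u v, G.Adj u v → 1 ≤ y u + y v) →
      ∑ v, w v * x v ≤ ∑ v, w v * y v)
    (V0 V12 V1 : Finset V)
    (hV0 : ∀ v, v ∈ V0 ↔ x v = 0)
    (hV12 : ∀ v, v ∈ V12 ↔ x v = 1/2)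
    (hV1 : ∀ v, v ∈ V1 ↔ x v = 1)
    (C : Finset V)
    (hCsub : C ⊆ V12)
    (hCcov : ∀ u v, u ∈ V12 → v ∈ V12 → G.Adj u v → u ∈ C ∨ v ∈ C)
    (hCmin : ∀ D : Finset V, D ⊆ V12 →
      (∀ u v, u ∈ V12 → v ∈ V12 → G.Adj u v → u ∈ D ∨ v ∈ D) →
      ∑ v ∈ C, w v ≤ ∑ v ∈ D, w v) :
    (∀ u v, G.Adj u v → u ∈ C ∪ V1 ∨ v ∈ C ∪ V1) ∧
    (∀ D : Finset V, (∀ u v, G.Adj u v → u ∈ D ∨ v ∈ D) →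
      ∑ v ∈ C ∪ V1, w v ≤ ∑ v ∈ D, w v) := by
  refine ⟨fun u v huv => ?_, fun D hD => ?_⟩
  · have h := hxE u v huv
    have hC := hCcov u v
    simp only [Finset.mem_union, hV1, hV12] at hC ⊢
    rcases hHalf u with hu | hu | hu <;> rcases hHalf v with hv | hv | hv <;>
      first
        | exact Or.inl (Or.inr hu)
        | exact Or.inr (Or.inr hv)
        | exact (hC hu hv huv).imp Or.inl Or.inl
        | (exfalso; linarith)
  · -- Moving `x` to `1/2` on `V₀ ∩ D` and `V₁ \ D` keeps it feasible.
    have hexchange : ∑ v ∈ V1 \ D, w v ≤ ∑ v ∈ D ∩ V0, w v := by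
      have key := hopt (fun v => if v ∈ V1 \ D ∨ v ∈ D ∩ V0 then 1/2 else x v)
        (fun v => by
          split_ifs
          · norm_num
          · exact hx0 v)
        (fun u v huv => by
          have h := hxE u v huv
          have hd := hD u v huv
          simp only [Finset.mem_sdiff, Finset.mem_inter, hV0, hV1]
          rcases hHalf u with hu | hu | hu <;> rcases hHalf v with hv | hv | hv <;>
            by_cases hDu : u ∈ D <;> by_cases hDv : v ∈ D <;>
            revert h hd <;> norm_num [hu, hv, hDu, hDv])
      have hdiff : ∑ v, w v * (if v ∈ V1 \ D ∨ v ∈ D ∩ V0 then 1/2 else x v)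
          = ∑ v, w v * x v
            + ((∑ v ∈ D ∩ V0, w v) - ∑ v ∈ V1 \ D, w v) / 2 := by
        rw [← Finset.sum_ite_mem_eq (D ∩ V0), ← Finset.sum_ite_mem_eq (V1 \ D),
          ← Finset.sum_sub_distrib, Finset.sum_div, ← Finset.sum_add_distrib]
        refine Finset.sum_congr rfl fun v _ => ?_
        simp only [Finset.mem_sdiff, Finset.mem_inter, hV0, hV1]
        rcases hHalf v with hv | hv | hv <;> by_cases hDv : v ∈ D <;>
          simp [hv, hDv] <;> ring
      linarith
    have hhalf : ∑ v ∈ C, w v ≤ ∑ v ∈ D ∩ V12, w v :=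
      hCmin _ Finset.inter_subset_right fun u v hu hv huv =>
        (hD u v huv).imp (fun h => Finset.mem_inter.2 ⟨h, hu⟩)
          (fun h => Finset.mem_inter.2 ⟨h, hv⟩)
    have hsplit : ∑ v ∈ D, w v
        = ∑ v ∈ D ∩ V0, w v + ∑ v ∈ D ∩ V12, w v + ∑ v ∈ D ∩ V1, w v := by
      simp only [← Finset.sum_ite_mem, ← Finset.sum_add_distrib]
      refine Finset.sum_congr rfl fun v _ => ?_
      simp only [hV0, hV12, hV1]
      rcases hHalf v with hv | hv | hv <;> norm_num [hv]
    have hV1split := Finset.sum_inter_add_sum_sdiff V1 D w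
    have hunion : ∑ v ∈ C ∪ V1, w v = ∑ v ∈ C, w v + ∑ v ∈ V1, w v := by
      refine Finset.sum_union (Finset.disjoint_left.2 fun v hC h1 => ?_)
      have h := (hV12 v).1 (hCsub hC)
      rw [(hV1 v).1 h1] at h
      norm_num at h
    rw [Finset.inter_comm] at hV1split
    linarith
end

section
/- Let x be an optimal half-integral solution of the vertex-cover LP of G, with V_{1/2} and V_1 the sets of vertices where x equals 1/2 and 1 respectively. Then vc*(G) = vc*(G[V_{1/2}]) + w(V_1), where vc* denotes the minimum weight of a vertex cover and G[V_{1/2}] is the induced subgraph of G on V_{1/2} with inherited weights. -/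
/-- For an optimal half-integral LP solution `x` with level sets
`V_{1/2}, V₁`, one has `vc*(G) = vc*(G[V_{1/2}]) + w(V₁)`. -/
theorem vcStar_eq_induced_vcStar_add_weight_V1 {V : Type*} [Fintype V] [DecidableEq V]
    (G : SimpleGraph V) (w : V → ℝ) (hw : ∀ v, 0 < w v)
    (x : V → ℝ)
    (hx0 : ∀ v, 0 ≤ x v)
    (hxE : ∀ u v, G.Adj u v → 1 ≤ x u + x v)
    (hHalf : ∀ v, x v = 0 ∨ x v = 1/2 ∨ x v = 1)
    (hopt : ∀ y : V → ℝ, (∀ v, 0 ≤ y v) → (∀ u v, G.Adj u v → 1 ≤ y u + y v) →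
      ∑ v, w v * x v ≤ ∑ v, w v * y v)
    (V12 V1 : Finset V)
    (hV12 : ∀ v, v ∈ V12 ↔ x v = 1/2)
    (hV1 : ∀ v, v ∈ V1 ↔ x v = 1)
    (vcG vcH : ℝ)
    (hvcG : IsLeast {r : ℝ | ∃ C : Finset V,
      (∀ u v, G.Adj u v → u ∈ C ∨ v ∈ C) ∧ r = ∑ v ∈ C, w v} vcG)
    (hvcH : IsLeast {r : ℝ | ∃ C : Finset V, C ⊆ V12 ∧
      (∀ u v, u ∈ V12 → v ∈ V12 → G.Adj u v → u ∈ C ∨ v ∈ C) ∧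
      r = ∑ v ∈ C, w v} vcH) :
    vcG = vcH + ∑ v ∈ V1, w v := by
  apply le_antisymm
  · obtain ⟨C, hC, hcov, rfl⟩ := hvcH.1
    have hdisj : Disjoint C V1 := by
      rw [Finset.disjoint_left]
      intro v hvC hv1
      have h12 := (hV12 v).1 (hC hvC)
      have h1 := (hV1 v).1 hv1
      linarith
    refine hvcG.2 ⟨C ∪ V1, fun u v huv => ?_, (Finset.sum_union hdisj).symm⟩
    have hE := hxE u v huv
    have hcov' := hcov u v
    simp only [hV12, Finset.mem_union, hV1] at hcov' ⊢
    rcases hHalf u with hu | hu | hu <;> rcases hHalf v with hv | hv | hv <;>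
      first
      | exact Or.inl (Or.inr hu)
      | exact Or.inr (Or.inr hv)
      | exact (hcov' hu hv huv).imp Or.inl Or.inl
      | (exfalso; linarith)
  · obtain ⟨C, hcov, rfl⟩ := hvcG.1
    have hH : vcH ≤ ∑ v ∈ C ∩ V12, w v := by
      refine hvcH.2 ⟨C ∩ V12, Finset.inter_subset_right, fun u v hu hv huv => ?_, rfl⟩
      simpa [hu, hv] using hcov u v huv
    -- Moving `x` halfway towards the indicator of `C` on its integral part keeps it feasible.
    let y : V → ℝ := fun v => if x v = 1/2 then 1/2 else (x v + if v ∈ C then 1 else 0) / 2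
    have hy := hopt y
      (fun v => by
        dsimp only [y]
        have := hx0 v
        split_ifs <;> linarith)
      (fun u v huv => by
        dsimp only [y]
        have hE := hxE u v huv
        have hc := hcov u v huv
        rcases hHalf u with hu | hu | hu <;> rcases hHalf v with hv | hv | hv <;>
          by_cases huC : u ∈ C <;> by_cases hvC : v ∈ C <;>
          simp only [hu, hv, huC, hvC, or_self] at hE hc ⊢ <;>
          first | (norm_num; done) | (exfalso; norm_num at hE))
    have hsum : ∑ v ∈ C ∩ V12, w v + ∑ v ∈ V1, w v - ∑ v ∈ C, w v
        = 2 * (∑ v, w v * x v - ∑ v, w v * y v) := by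
      have hind (S : Finset V) : ∑ v ∈ S, w v = ∑ v, if v ∈ S then w v else 0 := by simp
      rw [hind (C ∩ V12), hind V1, hind C, ← Finset.sum_add_distrib, ← Finset.sum_sub_distrib,
        ← Finset.sum_sub_distrib, Finset.mul_sum]
      refine Finset.sum_congr rfl fun v _ => ?_
      dsimp only [y]
      simp only [Finset.mem_inter, hV12, hV1]
      rcases hHalf v with hv | hv | hv <;> by_cases hvC : v ∈ C <;>
        simp only [hv, hvC] <;> norm_num <;> ring
    linarith
end

section
/- Let x be an optimal half-integral solution of the vertex-cover LP of G, with V_{1/2} = {v : x_v = 1/2} and V_1 = {v : x_v = 1}. Then every optimal feasible solution y of the vertex-cover LP of the induced subgraph G[V_{1/2}] satisfies val(y) = val(x) − w(V_1) = w(V_{1/2})/2. -/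
/-- For an optimal half-integral LP solution `x` of `G` with level sets
`V_{1/2}, V₁`, every optimal feasible solution `y` of the vertex-cover LP of the induced
subgraph `G[V_{1/2}]` satisfies `val(y) = val(x) - w(V₁) = w(V_{1/2})/2`. -/
theorem induced_LP_opt_value {V : Type*} [Fintype V] [DecidableEq V]
    (G : SimpleGraph V) (w : V → ℝ) (hw : ∀ v, 0 < w v)
    (x : V → ℝ)
    (hx0 : ∀ v, 0 ≤ x v)
    (hxE : ∀ u v, G.Adj u v → 1 ≤ x u + x v)
    (hHalf : ∀ v, x v = 0 ∨ x v = 1/2 ∨ x v = 1)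
    (hopt : ∀ y : V → ℝ, (∀ v, 0 ≤ y v) → (∀ u v, G.Adj u v → 1 ≤ y u + y v) →
      ∑ v, w v * x v ≤ ∑ v, w v * y v)
    (V12 V1 : Finset V)
    (hV12 : ∀ v, v ∈ V12 ↔ x v = 1/2)
    (hV1 : ∀ v, v ∈ V1 ↔ x v = 1)
    (y : V → ℝ)
    (hy0 : ∀ v ∈ V12, 0 ≤ y v)
    (hyE : ∀ u v, u ∈ V12 → v ∈ V12 → G.Adj u v → 1 ≤ y u + y v)
    (hyOpt : ∀ z : V → ℝ, (∀ v ∈ V12, 0 ≤ z v) →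
      (∀ u v, u ∈ V12 → v ∈ V12 → G.Adj u v → 1 ≤ z u + z v) →
      ∑ v ∈ V12, w v * y v ≤ ∑ v ∈ V12, w v * z v) :
    ∑ v ∈ V12, w v * y v = ∑ v, w v * x v - ∑ v ∈ V1, w v ∧
    ∑ v ∈ V12, w v * y v = (∑ v ∈ V12, w v) / 2 := by
  have split_sum (z : V → ℝ) :
      ∑ v, w v * (if v ∈ V12 then z v else x v) = ∑ v ∈ V12, w v * z v + ∑ v ∈ V1, w v := by
    have hterm (v : V) : w v * (if v ∈ V12 then z v else x v) =
        (if v ∈ V12 then w v * z v else 0) + (if v ∈ V1 then w v else 0) := by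
      rcases hHalf v with h | h | h <;> norm_num [hV12, hV1, h]
    simp only [hterm, Finset.sum_add_distrib, Finset.sum_ite_mem, Finset.univ_inter]
  have hval : ∑ v, w v * x v = (∑ v ∈ V12, w v) / 2 + ∑ v ∈ V1, w v := by
    have hx (v : V) : (if v ∈ V12 then 1 / 2 else x v) = x v := by
      split_ifs with h
      · exact ((hV12 v).1 h).symm
      · rfl
    have h := split_sum fun _ => 1 / 2
    simp only [hx, ← Finset.sum_mul] at h
    linarith
  have hle : ∑ v ∈ V12, w v * y v ≤ (∑ v ∈ V12, w v) / 2 := by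
    have h := hyOpt (fun _ => 1 / 2) (fun _ _ => by norm_num) (fun _ _ _ _ _ => by norm_num)
    rw [← Finset.sum_mul] at h
    linarith
  have hge := hopt (fun v => if v ∈ V12 then y v else x v)
    (fun v => by
      split_ifs with h
      · exact hy0 v h
      · exact hx0 v)
    (fun u v huv => by
      have hE := hxE u v huv
      split_ifs with hu hv hv
      · exact hyE u v hu hv huv
      · have hu' := hy0 u hu
        rw [hV12] at hu hv
        rcases hHalf v with h | h | h <;> first | exact absurd h hv | linarith
      · have hv' := hy0 v hv
        rw [hV12] at hu hv
        rcases hHalf u with h | h | h <;> first | exact absurd h hu | linarith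
      · exact hE)
  rw [split_sum] at hge
  constructor <;> linarith
end

section
/- Let x be an optimal half-integral solution of the vertex-cover LP of G, with V_{1/2} = {v : x_v = 1/2}. Then the restriction of x to V_{1/2} (i.e., the all-1/2 assignment) is a feasible and optimal solution of the vertex-cover LP of the induced subgraph G[V_{1/2}]. -/
/-- For an optimal half-integral LP solution `x` of `G` with
`V_{1/2} = {v : x v = 1/2}`, the restriction of `x` to `V_{1/2}` (the all-1/2 assignment)
is a feasible and optimal solution of the vertex-cover LP of the induced subgraph
`G[V_{1/2}]`. -/
theorem restriction_optimal_for_induced {V : Type*} [Fintype V] [DecidableEq V]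
    (G : SimpleGraph V) (w : V → ℝ) (hw : ∀ v, 0 < w v)
    (x : V → ℝ)
    (hx0 : ∀ v, 0 ≤ x v)
    (hxE : ∀ u v, G.Adj u v → 1 ≤ x u + x v)
    (hHalf : ∀ v, x v = 0 ∨ x v = 1/2 ∨ x v = 1)
    (hopt : ∀ y : V → ℝ, (∀ v, 0 ≤ y v) → (∀ u v, G.Adj u v → 1 ≤ y u + y v) →
      ∑ v, w v * x v ≤ ∑ v, w v * y v)
    (V12 : Finset V)
    (hV12 : ∀ v, v ∈ V12 ↔ x v = 1/2) :
    (∀ v ∈ V12, 0 ≤ x v) ∧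
    (∀ u v, u ∈ V12 → v ∈ V12 → G.Adj u v → 1 ≤ x u + x v) ∧
    (∀ z : V → ℝ, (∀ v ∈ V12, 0 ≤ z v) →
      (∀ u v, u ∈ V12 → v ∈ V12 → G.Adj u v → 1 ≤ z u + z v) →
      ∑ v ∈ V12, w v * x v ≤ ∑ v ∈ V12, w v * z v) := by
  refine ⟨fun v _ => hx0 v, fun u v _ _ => hxE u v, fun z hz0 hzE => ?_⟩
  have eq_one_of_adj : ∀ u v, u ∈ V12 → v ∉ V12 → G.Adj u v → x v = 1 := by
    intro u v hu hv huv
    have hu' := (hV12 u).1 hu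
    have hsum := hxE u v huv
    rcases hHalf v with h | h | h
    · linarith
    · exact absurd ((hV12 v).2 h) hv
    · exact h
  have key := hopt (fun v => if v ∈ V12 then z v else x v)
    (fun v => by
      split_ifs with hv
      exacts [hz0 v hv, hx0 v])
    (fun u v huv => by
      split_ifs with hu hv hv
      · exact hzE u v hu hv huv
      · linarith [eq_one_of_adj u v hu hv huv, hz0 u hu]
      · linarith [eq_one_of_adj v u hv hu huv.symm, hz0 v hv]
      · exact hxE u v huv)
  have sum_inside : ∑ v ∈ V12, w v * (if v ∈ V12 then z v else x v) = ∑ v ∈ V12, w v * z v :=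
    Finset.sum_congr rfl fun v hv => by rw [if_pos hv]
  have sum_outside :
      ∑ v ∈ V12ᶜ, w v * (if v ∈ V12 then z v else x v) = ∑ v ∈ V12ᶜ, w v * x v :=
    Finset.sum_congr rfl fun v hv => by rw [if_neg (Finset.mem_compl.1 hv)]
  rw [← Finset.sum_add_sum_compl V12, ← Finset.sum_add_sum_compl V12 (fun v => w v * ite _ _ _),
    sum_inside, sum_outside] at key
  exact le_of_add_le_add_right key
end

section
/- Let x be an optimal half-integral solution of the vertex-cover LP of G, with V_{1/2} = {v : x_v = 1/2} and V_1 = {v : x_v = 1}, let 0 ≤ ε ≤ 1, and let I be an independent set of the induced subgraph G[V_{1/2}] with w(I) ≥ (1 − ε) · is*(G[V_{1/2}]). Then (V_{1/2} \ I) ∪ V_1 is a vertex cover of G of weight at most (1 + ε) · vc*(G). -/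
open Finset

section VertexCoverLP

variable {V : Type*} [Fintype V] [DecidableEq V] (G : SimpleGraph V) (w x : V → ℝ)

/-- The LP optimum is a lower bound for the weight of every vertex cover. -/
theorem val_le_sum_cover
    (hopt : ∀ y : V → ℝ, (∀ v, 0 ≤ y v) → (∀ u v, G.Adj u v → 1 ≤ y u + y v) →
      ∑ v, w v * x v ≤ ∑ v, w v * y v)
    (C : Finset V) (hC : ∀ u v, G.Adj u v → u ∈ C ∨ v ∈ C) :
    ∑ v, w v * x v ≤ ∑ v ∈ C, w v := by
  have h := hopt (fun v => if v ∈ C then 1 else 0) (fun v => by positivity) (fun u v h => by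
    rcases hC u v h with h | h <;> simp only [h, if_true] <;> split_ifs <;> norm_num)
  simpa using h

/-- An independent set on which an optimal solution `x` is constantly `1/2` weighs at most the
LP optimum. -/
theorem sum_indep_half_le_val (hx0 : ∀ v, 0 ≤ x v) (hxE : ∀ u v, G.Adj u v → 1 ≤ x u + x v)
    (hopt : ∀ y : V → ℝ, (∀ v, 0 ≤ y v) → (∀ u v, G.Adj u v → 1 ≤ y u + y v) →
      ∑ v, w v * x v ≤ ∑ v, w v * y v)
    (J : Finset V) (hJx : ∀ v ∈ J, x v = 1 / 2)
    (hJ : ∀ u v, u ∈ J → v ∈ J → ¬ G.Adj u v) :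
    ∑ v ∈ J, w v ≤ ∑ v, w v * x v := by
  -- Competing solution: lower `x` to `0` on `J`, double it elsewhere.
  have h := hopt (fun v => if v ∈ J then 0 else 2 * x v)
    (fun v => by have := hx0 v; split_ifs <;> linarith)
    (fun u v h => by
      have := hxE u v h
      have := hx0 u
      have := hx0 v
      split_ifs with hu hv hv
      · exact absurd h (hJ u v hu hv)
      · linarith [hJx u hu]
      · linarith [hJx v hv]
      · linarith)
  have hpt : ∀ v, w v * (if v ∈ J then 0 else 2 * x v) + (if v ∈ J then w v else 0)
      = 2 * (w v * x v) := by
    intro v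
    split_ifs with hv
    · rw [hJx v hv]; ring
    · ring
  have hsum := sum_congr (rfl : (univ : Finset V) = univ) fun v _ => hpt v
  rw [sum_add_distrib, ← mul_sum] at hsum
  simp only [sum_ite_mem, univ_inter] at hsum
  linarith

/-- Weighted Nemhauser–Trotter inequality: completing the trace of a vertex cover `C` on the half
level set by the level set of value one costs no more than `C`. -/
theorem sum_level_sets_le_cover
    (hxE : ∀ u v, G.Adj u v → 1 ≤ x u + x v)
    (hHalf : ∀ v, x v = 0 ∨ x v = 1 / 2 ∨ x v = 1)
    (hopt : ∀ y : V → ℝ, (∀ v, 0 ≤ y v) → (∀ u v, G.Adj u v → 1 ≤ y u + y v) →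
      ∑ v, w v * x v ≤ ∑ v, w v * y v)
    (V12 V1 : Finset V) (hV12 : ∀ v, v ∈ V12 ↔ x v = 1 / 2) (hV1 : ∀ v, v ∈ V1 ↔ x v = 1)
    (C : Finset V) (hC : ∀ u v, G.Adj u v → u ∈ C ∨ v ∈ C) :
    ∑ v ∈ V12, w v + ∑ v ∈ V1, w v ≤ ∑ v ∈ C, w v + ∑ v ∈ V12 \ C, w v := by
  -- Competing solution: average `x` with the indicator of `C` off the half level set.
  have h := hopt
    (fun v => if x v = 1 / 2 then 1 / 2 else (x v + if v ∈ C then 1 else 0) / 2)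
    (fun v => by
      rcases hHalf v with hv | hv | hv <;> simp only [hv] <;> split_ifs <;> norm_num)
    (fun u v h => by
      have h1 := hxE u v h
      have h2 := hC u v h
      rcases hHalf u with hu | hu | hu <;> rcases hHalf v with hv | hv | hv <;>
        simp only [hu, hv] at h1 ⊢ <;> split_ifs <;> first | linarith | simp_all)
  have hpt : ∀ v, (if v ∈ V12 then w v else 0) + (if v ∈ V1 then w v else 0)
      + 2 * (w v * if x v = 1 / 2 then 1 / 2 else (x v + if v ∈ C then 1 else 0) / 2)
      = (if v ∈ C then w v else 0) + (if v ∈ V12 \ C then w v else 0) + 2 * (w v * x v) := by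
    intro v
    simp only [mem_sdiff, hV12, hV1]
    by_cases hvC : v ∈ C <;> rcases hHalf v with hv | hv | hv <;> simp only [hv, hvC] <;>
      norm_num <;> ring
  have hsum := sum_congr (rfl : (univ : Finset V) = univ) fun v _ => hpt v
  simp only [sum_add_distrib, ← mul_sum] at hsum
  simp only [sum_ite_mem, univ_inter] at hsum
  linarith

end VertexCoverLP

/-- For an optimal half-integral LP solution `x` of `G` with level sets
`V_{1/2}, V₁`, `0 ≤ ε ≤ 1`, and an independent set `I` of `G[V_{1/2}]` with
`w(I) ≥ (1-ε)·is*(G[V_{1/2}])`, the set `(V_{1/2} \ I) ∪ V₁` is a vertex cover of `G`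
of weight at most `(1+ε)·vc*(G)`. -/
theorem approx_indep_on_half_gives_approx_vc {V : Type*} [Fintype V] [DecidableEq V]
    (G : SimpleGraph V) (w : V → ℝ) (hw : ∀ v, 0 < w v)
    (x : V → ℝ)
    (hx0 : ∀ v, 0 ≤ x v)
    (hxE : ∀ u v, G.Adj u v → 1 ≤ x u + x v)
    (hHalf : ∀ v, x v = 0 ∨ x v = 1/2 ∨ x v = 1)
    (hopt : ∀ y : V → ℝ, (∀ v, 0 ≤ y v) → (∀ u v, G.Adj u v → 1 ≤ y u + y v) →
      ∑ v, w v * x v ≤ ∑ v, w v * y v)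
    (V12 V1 : Finset V)
    (hV12 : ∀ v, v ∈ V12 ↔ x v = 1/2)
    (hV1 : ∀ v, v ∈ V1 ↔ x v = 1)
    (vcG isH : ℝ)
    (hvcG : IsLeast {r : ℝ | ∃ C : Finset V,
      (∀ u v, G.Adj u v → u ∈ C ∨ v ∈ C) ∧ r = ∑ v ∈ C, w v} vcG)
    (hisH : IsGreatest {r : ℝ | ∃ J : Finset V, J ⊆ V12 ∧
      (∀ u v, u ∈ J → v ∈ J → ¬ G.Adj u v) ∧ r = ∑ v ∈ J, w v} isH)
    (ε : ℝ) (hε0 : 0 ≤ ε) (hε1 : ε ≤ 1)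
    (I : Finset V)
    (hIsub : I ⊆ V12)
    (hI : ∀ u v, u ∈ I → v ∈ I → ¬ G.Adj u v)
    (hIw : (1 - ε) * isH ≤ ∑ v ∈ I, w v) :
    (∀ u v, G.Adj u v → u ∈ (V12 \ I) ∪ V1 ∨ v ∈ (V12 \ I) ∪ V1) ∧
    ∑ v ∈ (V12 \ I) ∪ V1, w v ≤ (1 + ε) * vcG := by
  obtain ⟨⟨C, hC, rfl⟩, -⟩ := hvcG
  have hcover := sum_level_sets_le_cover G w x hxE hHalf hopt V12 V1 hV12 hV1 C hC
  have hdiff : ∑ v ∈ V12 \ C, w v ≤ isH := by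
    refine hisH.2 ⟨V12 \ C, sdiff_subset, fun u v hu hv h => ?_, rfl⟩
    rcases hC u v h with h | h <;> simp_all
  have hisC : isH ≤ ∑ v ∈ C, w v := by
    obtain ⟨⟨J, hJs, hJ, rfl⟩, -⟩ := hisH
    exact (sum_indep_half_le_val G w x hx0 hxE hopt J
      (fun v hv => (hV12 v).1 (hJs hv)) hJ).trans (val_le_sum_cover G w x hopt C hC)
  constructor
  · intro u v h
    have := hxE u v h
    have hIuv := hI u v
    simp only [mem_union, mem_sdiff, hV12, hV1]
    grind
  · have hdisj : Disjoint (V12 \ I) V1 := by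
      rw [disjoint_left]
      intro v hv hv1
      have h12 := (hV12 v).1 (mem_sdiff.1 hv).1
      rw [(hV1 v).1 hv1] at h12
      norm_num at h12
    rw [sum_union hdisj]
    have hsplit := sum_sdiff (f := w) hIsub
    nlinarith [mul_le_mul_of_nonneg_left hisC hε0]
end
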